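/- arXiv:1306.1572 — 2 statements merged into one kernel-verified Lean document; each statement's English description precedes it below -/
import Mathlib

section
/- Let G be a bicolored multigraph on n vertices with red edge set R and black edge set B, let a, b be positive integers with k = a + b, suppose |E| = k·n − k, and tie G down at a vertex u. Call a function t : E → Fin k an [a,b]-tree decomposition if every fiber t⁻¹(i) is a spanning tree of G and t(e) < a for every red edge e. Then there exists a sign function ε assigning to each [a,b]-tree decomposition t a value ε(t) ∈ {1, −1} such that the pure condition satisfies C_G = Σ_t ε(t) · Π_{e ∈ E} X_(e, t e), the sum ranging over all [a,b]-tree decompositions t. -/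
open MvPolynomial

/-- The sub-multigraph with edge set `F` (of a multigraph with endpoint maps
`tail`, `head`) is `(k,ℓ)`-sparse: every nonempty vertex subset `W` induces at
most `k·|W| − ℓ` edges of `F`. -/
def SparseOn {V E : Type} [DecidableEq V] (tail head : E → V) (k ℓ : ℤ)
    (F : Finset E) : Prop :=
  ∀ W : Finset V, W.Nonempty →
    ((F.filter fun e => tail e ∈ W ∧ head e ∈ W).card : ℤ) ≤ k * (W.card : ℤ) - ℓ

/-- The sub-multigraph with edge set `F` of a bicolored multigraph (red edges are
those with `red e = true`) is `[a,b]`-sparse: there is a subset `B'` of the black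
edges of `F` such that the red edges of `F` together with `B'` form an `(a,a)`-sparse
multigraph and the remaining black edges of `F` form a `(b,b)`-sparse multigraph. -/
def ABSparseOn {V E : Type} [DecidableEq V] [DecidableEq E] (tail head : E → V)
    (red : E → Bool) (a b : ℕ) (F : Finset E) : Prop :=
  ∃ B' ⊆ F.filter fun e => red e = false,
    SparseOn tail head (a : ℤ) (a : ℤ) ((F.filter fun e => red e = true) ∪ B') ∧
    SparseOn tail head (b : ℤ) (b : ℤ) ((F.filter fun e => red e = false) \ B')

/-- `T ⊆ E` is a spanning tree: it has `n − 1` edges and the graph on `Fin n`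
with edge set `T` is connected. -/
def IsSpanningTree {n : ℕ} {E : Type} (tail head : E → Fin n) (T : Finset E) : Prop :=
  T.card = n - 1 ∧
    (SimpleGraph.fromRel fun u v => ∃ e ∈ T, tail e = u ∧ head e = v).Connected

/-- The edge set `F` is the disjoint union of `a` spanning trees. -/
def IsTreePartition {n : ℕ} {E : Type} [DecidableEq E] (tail head : E → Fin n)
    (a : ℕ) (F : Finset E) : Prop :=
  ∃ T : Fin a → Finset E, (∀ i, IsSpanningTree tail head (T i)) ∧
    (∀ i j, i ≠ j → Disjoint (T i) (T j)) ∧ Finset.univ.biUnion T = F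

/-- `W` is a proper block of a `(k,k)`-graph on `n` vertices: `2 ≤ |W| < n` and the
induced multigraph on `W` is `(k,k)`-tight (i.e. `(k,k)`-sparse with exactly
`k·|W| − k` induced edges). -/
def IsProperBlock {n : ℕ} {E : Type} [Fintype E] (tail head : E → Fin n) (k : ℕ)
    (W : Finset (Fin n)) : Prop :=
  2 ≤ W.card ∧ W.card < n ∧
    (∀ W' ⊆ W, W'.Nonempty →
      ((Finset.univ.filter fun e => tail e ∈ W' ∧ head e ∈ W').card : ℤ) ≤
        (k : ℤ) * (W'.card : ℤ) - (k : ℤ)) ∧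
    ((Finset.univ.filter fun e => tail e ∈ W ∧ head e ∈ W).card : ℤ) =
      (k : ℤ) * (W.card : ℤ) - (k : ℤ)

/-- The vertex type of the contraction `G/H` by the vertex set `W`: the vertices
outside `W` together with a single new vertex (`Sum.inr ()`). -/
abbrev ContrV (n : ℕ) (W : Finset (Fin n)) : Type := {v : Fin n // v ∉ W} ⊕ Unit

/-- The projection of the vertices of `G` onto the vertices of `G/H`. -/
def contrMap {n : ℕ} (W : Finset (Fin n)) (v : Fin n) : ContrV n W :=
  if h : v ∈ W then Sum.inr () else Sum.inl ⟨v, h⟩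

/-- The pure condition of an `[a,b]`-frame: the determinant of the generic rigidity
matrix with the standard tie-down at `u`.  Rows are indexed by edges `E'` together
with `k` tie-down rows, transported to the column index type `V × Fin k` by the
equivalence `σ`.  The row of an edge `e` has the variable `X (var e, i)` in column
`(tail e, i)` and its negative in column `(head e, i)`, except that rows of red edges
vanish in all columns `(·, i)` with `a ≤ i`.  The `i`-th tie-down row has a `1` in
column `(u, i)` and `0` elsewhere.  The polynomial lives in
`S = MvPolynomial (E × Fin k) ℝ`, the variables of an edge `e` of the (sub)graph
being indexed via `var e : E`. -/
noncomputable def pureCond {E E' V : Type} [Fintype V] [DecidableEq V] (k a : ℕ)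
    (tail head : E' → V) (red : E' → Bool) (var : E' → E) (u : V)
    (σ : (E' ⊕ Fin k) ≃ (V × Fin k)) : MvPolynomial (E × Fin k) ℝ :=
  Matrix.det (Matrix.of fun r c : V × Fin k =>
    Sum.elim
      (fun e =>
        if red e = true ∧ a ≤ (c.2 : ℕ) then 0
        else if c.1 = tail e then (X (var e, c.2) : MvPolynomial (E × Fin k) ℝ)
        else if c.1 = head e then -X (var e, c.2)
        else 0)
      (fun i => if c = (u, i) then 1 else 0)
      (σ.symm r))

/-- The pure condition of a `k`-frame (uncolored body-and-bar setting): the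
determinant of the generic rigidity matrix with the standard tie-down at `u`. -/
noncomputable def pureCondBar {E E' V : Type} [Fintype V] [DecidableEq V] (k : ℕ)
    (tail head : E' → V) (var : E' → E) (u : V)
    (σ : (E' ⊕ Fin k) ≃ (V × Fin k)) : MvPolynomial (E × Fin k) ℝ :=
  pureCond k k tail head (fun _ => false) var u σ

/-- The rigidity matrix `M(G(p))` of an `[a,b]`-frame evaluated at the point `p`
(no tie-down rows). -/
def rigidityMatrixR {E : Type} {n k : ℕ} (a : ℕ) (tail head : E → Fin n)
    (red : E → Bool) (p : E × Fin k → ℝ) : Matrix E (Fin n × Fin k) ℝ :=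
  Matrix.of fun e c =>
    if red e = true ∧ a ≤ (c.2 : ℕ) then 0
    else if c.1 = tail e then p (e, c.2)
    else if c.1 = head e then -p (e, c.2)
    else 0

/-- The edge `e` is in the support of the polynomial `f`: some variable `X (e, i)`
occurs in `f`. -/
def InSupport {E : Type} [DecidableEq E] {k : ℕ} (f : MvPolynomial (E × Fin k) ℝ)
    (e : E) : Prop :=
  ∃ i : Fin k, (e, i) ∈ f.vars

/-- `p` is a generic point of `V(f)`: `f` vanishes at `p` and every polynomial
vanishing at `p` is divisible by `f`. -/
def GenericOn {E : Type} {k : ℕ} (f : MvPolynomial (E × Fin k) ℝ)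
    (p : E × Fin k → ℝ) : Prop :=
  eval p f = 0 ∧ ∀ h : MvPolynomial (E × Fin k) ℝ, eval p h = 0 → f ∣ h

/-- A bicolored multigraph is an `[a,b]`-circuit if it is not `[a,b]`-sparse but every
proper subset of its edge set is `[a,b]`-sparse. -/
def ABCircuit {V E : Type} [Fintype E] [DecidableEq V] [DecidableEq E]
    (tail head : E → V) (red : E → Bool) (a b : ℕ) : Prop :=
  ¬ ABSparseOn tail head red a b (Finset.univ : Finset E) ∧
    ∀ F : Finset E, F ⊂ Finset.univ → ABSparseOn tail head red a b F

/-- An `[a,b]`-graph is irreducible if for every edge `e₀`, adding a new edge parallel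
to `e₀` with the same endpoints and color yields an `[a,b]`-circuit. -/
def ABIrreducibleGraph {V E : Type} [Fintype E] [DecidableEq V] [DecidableEq E]
    (tail head : E → V) (red : E → Bool) (a b : ℕ) : Prop :=
  ∀ e₀ : E,
    ABCircuit (Sum.elim tail fun _ : Unit => tail e₀)
      (Sum.elim head fun _ : Unit => head e₀)
      (Sum.elim red fun _ : Unit => red e₀) a b

/-- The out-degree of the vertex `v` under the orientation `o` (`o e = true` means `e`
is directed from `tail e` to `head e`, `o e = false` the reverse). -/
def outDeg {n : ℕ} {E : Type} [Fintype E] (tail head : E → Fin n) (o : E → Bool)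
    (v : Fin n) : ℕ :=
  (Finset.univ.filter fun e =>
    (o e = true ∧ tail e = v) ∨ (o e = false ∧ head e = v)).card

/-- The orientation `o` has a directed cycle (polygon): a nonempty closed walk
traversing distinct edges, each in its assigned direction. -/
def HasDirCycle {n : ℕ} {E : Type} (tail head : E → Fin n) (o : E → Bool) : Prop :=
  ∃ m : ℕ, 0 < m ∧ ∃ (es : Fin m → E) (vs : Fin (m + 1) → Fin n),
    Function.Injective es ∧ vs 0 = vs (Fin.last m) ∧
    ∀ j : Fin m,
      (o (es j) = true ∧ tail (es j) = vs j.castSucc ∧ head (es j) = vs j.succ) ∨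
      (o (es j) = false ∧ head (es j) = vs j.castSucc ∧ tail (es j) = vs j.succ)

/-- The determinant is expanded multilinearly in the rows indexed by `E`, the rows indexed by
`K` being kept fixed. -/
theorem Matrix.det_sumElim_sum_smul {E K ι m R : Type*} [Fintype E] [DecidableEq E]
    [Fintype ι] [Fintype m] [DecidableEq m] [CommRing R]
    (σ : E ⊕ K ≃ m) (x : E → ι → R) (g : E → ι → m → R) (h : K → m → R) :
    Matrix.det (Matrix.of fun r => Sum.elim (fun e => ∑ i, x e i • g e i) h (σ.symm r)) =
      ∑ t : E → ι, (∏ e, x e (t e)) *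
        Matrix.det (Matrix.of fun r => Sum.elim (fun e => g e (t e)) h (σ.symm r)) := by
  let D := ((Matrix.detRowAlternating (n := m) (R := R)).toMultilinearMap.domDomCongr
    σ.symm).currySum
  have hD : ∀ y : E → m → R, D y h =
      Matrix.det (Matrix.of fun r => Sum.elim y h (σ.symm r)) := by
    intro y
    simp only [D, MultilinearMap.currySum_apply, MultilinearMap.domDomCongr_apply]
    rfl
  rw [← hD, MultilinearMap.map_sum, _root_.sum_apply]
  refine Finset.sum_congr rfl fun t _ => ?_
  rw [← hD, MultilinearMap.map_smul_univ]
  rfl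

theorem Matrix.isUnit_det_of_forall_single_mem_span {m R : Type*} [Fintype m] [DecidableEq m]
    [CommRing R] (N : Matrix m m R)
    (h : ∀ c, Pi.single c 1 ∈ Submodule.span R (Set.range N.row)) : IsUnit N.det := by
  have h' : ∀ c, ∃ p : m → R, ∑ r, p r • N.row r = Pi.single c 1 := fun c =>
    (Submodule.mem_span_range_iff_exists_fun R).1 (h c)
  choose P hP using h'
  have hPN : Matrix.of P * N = 1 := by
    ext c d
    have := congrFun (hP c) d
    simpa [Matrix.mul_apply, Matrix.one_apply, Pi.single_apply, eq_comm] using this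
  exact IsUnit.of_mul_eq_one_right (Matrix.of P).det (by rw [← Matrix.det_mul, hPN, Matrix.det_one])

/-- The simple graph underlying the edges of a multigraph that satisfy `p`. -/
abbrev edgeGraph {V E : Type*} (tail head : E → V) (p : E → Prop) : SimpleGraph V :=
  SimpleGraph.fromRel fun u v => ∃ e, p e ∧ tail e = u ∧ head e = v

/-- The tied-down incidence matrix of the assignment `t` of edges to the classes `K`: the row of
an edge `e` is its signed incidence vector in the block of columns `(·, t e)`, and the tie-down
row `i` is the unit vector at `(u, i)`. -/
def tiedIncidence {V E K : Type*} [DecidableEq V] [DecidableEq K] (tail head : E → V) (u : V)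
    (σ : E ⊕ K ≃ V × K) (t : E → K) : Matrix (V × K) (V × K) ℤ :=
  Matrix.of fun r => Sum.elim
    (fun e => Pi.single (tail e, t e) 1 - Pi.single (head e, t e) 1)
    (fun i => Pi.single (u, i) 1) (σ.symm r)

section tiedIncidence

variable {V E K : Type*} [DecidableEq V] [DecidableEq K]
  {tail head : E → V} {u : V} {σ : E ⊕ K ≃ V × K} {t : E → K}

theorem tiedIncidence_inl (e : E) : tiedIncidence tail head u σ t (σ (Sum.inl e)) =
    Pi.single (tail e, t e) 1 - Pi.single (head e, t e) 1 :=
  congrArg (Sum.elim _ _) (σ.symm_apply_apply _)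

theorem tiedIncidence_inr (i : K) :
    tiedIncidence tail head u σ t (σ (Sum.inr i)) = Pi.single (u, i) 1 :=
  congrArg (Sum.elim _ _) (σ.symm_apply_apply _)

variable [Fintype V] [Fintype K]

/-- If every class is connected, then the tied-down incidence matrix is unimodular. -/
theorem isUnit_det_tiedIncidence (h : ∀ i, (edgeGraph tail head fun e => t e = i).Connected) :
    IsUnit (tiedIncidence tail head u σ t).det := by
  refine Matrix.isUnit_det_of_forall_single_mem_span _ ?_
  rintro ⟨v, i⟩
  set L := Submodule.span ℤ (Set.range (tiedIncidence tail head u σ t).row)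
  have hu : (Pi.single (u, i) 1 : V × K → ℤ) ∈ L :=
    Submodule.subset_span ⟨σ (Sum.inr i), tiedIncidence_inr i⟩
  have hedge : ∀ e, (Pi.single (tail e, t e) 1 - Pi.single (head e, t e) 1 : V × K → ℤ) ∈ L :=
    fun e => Submodule.subset_span ⟨σ (Sum.inl e), tiedIncidence_inl e⟩
  clear_value L
  obtain ⟨w⟩ := (h i).preconnected v u
  induction w with
  | nil => exact hu
  | cons hadj _ ih =>
    obtain ⟨-, ⟨e, rfl, rfl, rfl⟩ | ⟨e, rfl, rfl, rfl⟩⟩ := (SimpleGraph.fromRel_adj _ _ _).1 hadj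
    · simpa using L.add_mem (hedge e) (ih hu)
    · simpa using L.sub_mem (ih hu) (hedge e)

/-- If some class is disconnected, then the tied-down incidence matrix is singular. -/
theorem connected_of_det_tiedIncidence_ne_zero (h : (tiedIncidence tail head u σ t).det ≠ 0)
    (i : K) : (edgeGraph tail head fun e => t e = i).Connected := by
  classical
  set G := edgeGraph tail head fun e => t e = i
  refine (SimpleGraph.connected_iff_exists_forall_reachable _).2 ⟨u, fun w => ?_⟩
  by_contra hw
  refine h (Matrix.exists_mulVec_eq_zero_iff.1
    ⟨fun c => if c.2 = i ∧ ¬ G.Reachable u c.1 then 1 else 0, fun h0 => ?_, ?_⟩)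
  · simpa [hw] using congrFun h0 (w, i)
  · have hreach : ∀ e, t e = i → (G.Reachable u (tail e) ↔ G.Reachable u (head e)) := by
      intro e he
      by_cases hne : tail e = head e
      · rw [hne]
      · have hadj : G.Adj (tail e) (head e) :=
          (SimpleGraph.fromRel_adj _ _ _).2 ⟨hne, Or.inl ⟨e, he, rfl, rfl⟩⟩
        exact ⟨fun hr => hr.trans hadj.reachable, fun hr => hr.trans hadj.symm.reachable⟩
    ext r
    obtain ⟨e | j, rfl⟩ := σ.surjective r
    · rw [Matrix.mulVec, tiedIncidence_inl, sub_dotProduct]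
      by_cases he : t e = i
      · simp [hreach e he]
      · simp [he]
    · rw [Matrix.mulVec, tiedIncidence_inr]
      simp

end tiedIncidence

/-- A connected multigraph on `V` has at least `|V| - 1` edges. -/
theorem card_le_card_filter_add_one_of_connected {V E : Type*} [Fintype V] [Fintype E]
    {tail head : E → V} {p : E → Prop} [DecidablePred p] (h : (edgeGraph tail head p).Connected) :
    Fintype.card V ≤ (Finset.univ.filter p).card + 1 := by
  have h1 := h.card_vert_le_card_edgeSet_add_one
  rw [Nat.card_eq_fintype_card] at h1
  refine h1.trans (Nat.add_le_add_right ?_ 1)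
  have hsub : (edgeGraph tail head p).edgeSet ⊆
      (fun e => s(tail e, head e)) '' (Finset.univ.filter p : Finset E) := by
    intro z
    induction z with
    | _ x y =>
      rintro ⟨-, ⟨e, he, rfl, rfl⟩ | ⟨e, he, rfl, rfl⟩⟩
      · exact ⟨e, by simpa using he, rfl⟩
      · exact ⟨e, by simpa using he, Sym2.eq_swap⟩
  calc Nat.card (edgeGraph tail head p).edgeSet
      ≤ ((fun e => s(tail e, head e)) '' (Finset.univ.filter p : Finset E)).ncard :=
        Set.ncard_le_ncard hsub (Set.toFinite _)
    _ ≤ (Finset.univ.filter p : Set E).ncard := Set.ncard_image_le (Set.toFinite _)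
    _ = _ := Set.ncard_coe_finset _

/-- When there are `k (n - 1)` edges, a partition into `k` connected spanning classes is a
partition into spanning trees. -/
theorem forall_isSpanningTree_iff_forall_connected {n k : ℕ} {E : Type} [Fintype E]
    {tail head : E → Fin n} (hE : Fintype.card E = k * n - k) (t : E → Fin k) :
    (∀ i, IsSpanningTree tail head (Finset.univ.filter fun e => t e = i)) ↔
      ∀ i, (edgeGraph tail head fun e => t e = i).Connected := by
  simp only [IsSpanningTree, Finset.mem_filter_univ]
  refine ⟨fun h i => (h i).2, fun h => ?_⟩
  have hle : ∀ i ∈ Finset.univ, n - 1 ≤ (Finset.univ.filter fun e => t e = i).card := by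
    intro i _
    have := card_le_card_filter_add_one_of_connected (h i)
    rw [Fintype.card_fin] at this
    omega
  have hsum : ∑ _i : Fin k, (n - 1) = ∑ i, (Finset.univ.filter fun e => t e = i).card := by
    rw [← Finset.card_eq_sum_card_fiberwise (fun _ _ => Finset.mem_univ _), Finset.card_univ, hE]
    simp [Nat.mul_sub]
  exact fun i => ⟨((Finset.sum_eq_sum_iff_of_le hle).1 hsum i (Finset.mem_univ i)).symm, h i⟩

/-- The expansion of the pure condition over all assignments of edges to coordinates. -/
theorem pureCond_eq_sum_det_tiedIncidence {V E : Type} [Fintype V] [DecidableEq V] [Fintype E]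
    [DecidableEq E] {k a : ℕ} {tail head : E → V} (hne : ∀ e, tail e ≠ head e) (red : E → Bool)
    (u : V) (σ : (E ⊕ Fin k) ≃ (V × Fin k)) :
    pureCond k a tail head red id u σ =
      ∑ t : E → Fin k,
        (∏ e, if red e = true ∧ a ≤ (t e : ℕ) then 0 else X (e, t e)) *
          C ((tiedIncidence tail head u σ t).det : ℝ) := by
  let g : E → Fin k → V × Fin k → MvPolynomial (E × Fin k) ℝ := fun e i =>
    Pi.single (tail e, i) 1 - Pi.single (head e, i) 1
  let x : E → Fin k → MvPolynomial (E × Fin k) ℝ := fun e i =>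
    if red e = true ∧ a ≤ (i : ℕ) then 0 else X (e, i)
  let h : Fin k → V × Fin k → MvPolynomial (E × Fin k) ℝ := fun i => Pi.single (u, i) 1
  have key := Matrix.det_sumElim_sum_smul σ x g h
  have hlhs : pureCond k a tail head red id u σ = Matrix.det (Matrix.of fun r =>
      Sum.elim (fun e => ∑ i, x e i • g e i) h (σ.symm r)) := by
    unfold pureCond
    congr 1
    ext1 r ⟨v, j⟩
    obtain ⟨e | i, rfl⟩ := σ.surjective r
    · have : (∑ i, x e i • g e i) (v, j) =
          x e j * ((if v = tail e then 1 else 0) - if v = head e then 1 else 0) := by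
        rw [Finset.sum_apply, Finset.sum_eq_single j]
        · simp [g, Pi.single_apply]
        · intro i _ hij
          simp [g, hij.symm]
        · simp
      simp only [Matrix.of_apply, Equiv.symm_apply_apply, Sum.elim_inl, this, x]
      by_cases hv : v = tail e
      · subst hv
        simp [hne e]
      · by_cases hr : red e = true ∧ a ≤ (j : ℕ)
        · simp [hr]
        · simp only [if_neg hr, if_neg hv]
          split_ifs <;> simp
    · simp [h, Pi.single_apply]
  rw [hlhs, key]
  refine Finset.sum_congr rfl fun t _ => ?_
  congr 1
  rw [map_intCast, Int.cast_det]
  congr 1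
  ext1 r c
  obtain ⟨e | i, rfl⟩ := σ.surjective r
  · simp [tiedIncidence, g, Pi.single_apply]
  · simp [tiedIncidence, h, Pi.single_apply]

open Classical in
/-- the pure condition of a tied-down bicolored graph with `k·n − k`
edges is the signed sum, over all `[a,b]`-tree decompositions `t : E → Fin k`
(fibers are spanning trees and red edges go to trees of index `< a`), of the
monomials `∏ e, X (e, t e)`. -/
theorem stmt8 {n : ℕ} {E : Type} [Fintype E] [DecidableEq E]
    (tail head : E → Fin n) (hlt : ∀ e, tail e < head e)
    (red : E → Bool) (a b : ℕ) (ha : 0 < a) (hb : 0 < b)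
    (hE : Fintype.card E = (a + b) * n - (a + b))
    (u : Fin n) (σ : (E ⊕ Fin (a + b)) ≃ (Fin n × Fin (a + b))) :
    ∃ ε : (E → Fin (a + b)) → ℝ,
      (∀ t : E → Fin (a + b),
        ((∀ i : Fin (a + b),
            IsSpanningTree tail head (Finset.univ.filter fun e => t e = i)) ∧
          ∀ e : E, red e = true → (t e : ℕ) < a) →
          (ε t = 1 ∨ ε t = -1)) ∧
      pureCond (a + b) a tail head red id u σ =
        ∑ t ∈ Finset.univ.filter (fun t : E → Fin (a + b) =>
            (∀ i : Fin (a + b),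
              IsSpanningTree tail head (Finset.univ.filter fun e => t e = i)) ∧
            ∀ e : E, red e = true → (t e : ℕ) < a),
          C (ε t) * ∏ e : E, X (e, t e) := by
  refine ⟨fun t => ((tiedIncidence tail head u σ t).det : ℝ), ?_, ?_⟩
  · rintro t ⟨ht, -⟩
    have hunit := isUnit_det_tiedIncidence (u := u) (σ := σ)
      ((forall_isSpanningTree_iff_forall_connected hE t).1 ht)
    rcases Int.isUnit_iff.1 hunit with h | h <;> simp [h]
  · rw [pureCond_eq_sum_det_tiedIncidence fun e => (hlt e).ne]
    symm
    refine Finset.sum_subset_zero_on_sdiff (Finset.subset_univ _) ?_ ?_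
    · intro t ht
      simp only [Finset.mem_sdiff, Finset.mem_univ, true_and, Finset.mem_filter] at ht
      by_cases hred : ∀ e : E, red e = true → (t e : ℕ) < a
      · have hdet : (tiedIncidence tail head u σ t).det = 0 := by
          by_contra h
          exact ht ⟨(forall_isSpanningTree_iff_forall_connected hE t).2
            (connected_of_det_tiedIncidence_ne_zero h), hred⟩
        simp [hdet]
      · push Not at hred
        obtain ⟨e, he⟩ := hred
        refine mul_eq_zero_of_left (Finset.prod_eq_zero (Finset.mem_univ e) ?_) _
        exact if_pos he
    · intro t ht
      rw [mul_comm]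
      congr 1
      refine Finset.prod_congr rfl fun e _ => (if_neg ?_).symm
      rintro ⟨he, hle⟩
      exact absurd ((Finset.mem_filter.1 ht).2.2 e he) (not_lt.2 hle)
end

section
/- Let G be an [a,b]-graph on n vertices (a, b positive integers, k = a + b) with pure condition C_G (standard tie-down at a vertex u), let f be an irreducible factor of C_G in S, and let e be an edge in the support of f. Then every monomial appearing in f (with nonzero coefficient) is divisible by X_(e,i) for some i ∈ Fin k. -/
open MvPolynomial

/-- The algebra homomorphism scaling each variable `X s` by `T ^ w s`, where `T` is a new
variable. -/
noncomputable def MvPolynomial.weightScaling {τ R : Type*} [CommSemiring R] (w : τ → ℕ) :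
    MvPolynomial τ R →ₐ[R] Polynomial (MvPolynomial τ R) :=
  aeval fun s => Polynomial.monomial (w s) (X s)

theorem MvPolynomial.weightScaling_monomial {τ R : Type*} [CommSemiring R] (w : τ → ℕ)
    (m : τ →₀ ℕ) (r : R) :
    weightScaling w (monomial m r) =
      Polynomial.monomial (Finsupp.weight w m) (monomial m r) := by
  classical
  induction m using Finsupp.induction generalizing r with
  | zero =>
    rw [← C_apply, weightScaling, ← algebraMap_eq, AlgHom.commutes]
    simp [algebraMap_eq, Polynomial.algebraMap_apply]
  | single_add s j m _ _ ih =>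
    rw [monomial_single_add, map_mul, ih, map_pow, weightScaling, aeval_X,
      Polynomial.monomial_pow, Polynomial.monomial_mul_monomial, map_add, Finsupp.weight_single,
      smul_eq_mul, mul_comm (w s)]

theorem MvPolynomial.coeff_weightScaling {τ R : Type*} [CommSemiring R] (w : τ → ℕ)
    (p : MvPolynomial τ R) (j : ℕ) :
    (weightScaling w p).coeff j = weightedHomogeneousComponent w j p := by
  classical
  induction p using MvPolynomial.induction_on' with
  | monomial m r =>
    rw [weightScaling_monomial, Polynomial.coeff_monomial]
    have := weightedHomogeneousComponent_of_mem (m := j) (n := Finsupp.weight w m)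
      (isWeightedHomogeneous_monomial w m r rfl)
    rw [this]
    simp [eq_comm]
  | add p q hp hq => rw [map_add, Polynomial.coeff_add, hp, hq, map_add]

theorem MvPolynomial.coeff_coeff_weightScaling {τ R : Type*} [CommSemiring R] (w : τ → ℕ)
    (p : MvPolynomial τ R) (m : τ →₀ ℕ) :
    ((weightScaling w p).coeff (Finsupp.weight w m)).coeff m = p.coeff m := by
  classical
  rw [coeff_weightScaling, coeff_weightedHomogeneousComponent, if_pos rfl]

theorem MvPolynomial.weightScaling_ne_zero {τ R : Type*} [CommSemiring R] (w : τ → ℕ)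
    {p : MvPolynomial τ R} (hp : p ≠ 0) : weightScaling w p ≠ 0 := by
  obtain ⟨m, hm⟩ := ne_zero_iff.mp hp
  intro h
  rw [← coeff_coeff_weightScaling w, h] at hm
  simp at hm

theorem MvPolynomial.IsWeightedHomogeneous.weightScaling_eq {τ R : Type*} [CommSemiring R]
    {w : τ → ℕ} {p : MvPolynomial τ R} {d : ℕ} (hp : IsWeightedHomogeneous w p d) :
    weightScaling w p = Polynomial.monomial d p := by
  classical
  ext1 j
  rw [coeff_weightScaling, weightedHomogeneousComponent_of_mem hp, Polynomial.coeff_monomial]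
  simp [eq_comm]

/-- Over a domain, every divisor of a nonzero weighted homogeneous polynomial is weighted
homogeneous. -/
theorem MvPolynomial.IsWeightedHomogeneous.of_dvd {τ R : Type*} [CommRing R] [IsDomain R]
    {w : τ → ℕ} {p f : MvPolynomial τ R} {d : ℕ} (hp : IsWeightedHomogeneous w p d)
    (hp0 : p ≠ 0) (hf : f ∣ p) : ∃ d', IsWeightedHomogeneous w f d' := by
  obtain ⟨g, rfl⟩ := hf
  have hf0 := weightScaling_ne_zero w (left_ne_zero_of_mul hp0)
  have hg0 := weightScaling_ne_zero w (right_ne_zero_of_mul hp0)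
  have key := hp.weightScaling_eq
  rw [map_mul] at key
  have hdeg := congrArg Polynomial.natDegree key
  have htrail := congrArg Polynomial.natTrailingDegree key
  rw [Polynomial.natDegree_mul hf0 hg0, Polynomial.natDegree_monomial_eq _ hp0] at hdeg
  rw [Polynomial.natTrailingDegree_mul hf0 hg0, Polynomial.natTrailingDegree_monomial hp0]
    at htrail
  have hf1 := (weightScaling w f).natTrailingDegree_le_natDegree
  have hg1 := (weightScaling w g).natTrailingDegree_le_natDegree
  refine ⟨(weightScaling w f).natDegree, fun m hm => ?_⟩
  have hne : (weightScaling w f).coeff (Finsupp.weight w m) ≠ 0 := by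
    intro h
    rw [← coeff_coeff_weightScaling w, h] at hm
    simp at hm
  have h1 := Polynomial.le_natDegree_of_ne_zero hne
  have h2 := Polynomial.natTrailingDegree_le_of_ne_zero hne
  omega

open Module Submodule in
/-- **Rado's theorem** for linear matroids: a finite family of finite sets of vectors has a linearly
independent transversal if every subfamily `J` spans a subspace of dimension at least `|J|`. -/
theorem exists_linearIndependent_transversal {K M ι : Type*} [Field K] [AddCommGroup M]
    [Module K M] [Fintype ι] (A : ι → Finset M)
    (hA : ∀ J : Finset ι, J.card ≤ finrank K (span K (⋃ i ∈ J, (A i : Set M)))) :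
    ∃ x : ι → M, (∀ i, x i ∈ A i) ∧ LinearIndependent K x := by
  classical
  induction hN : ∑ i, (A i).card using Nat.strong_induction_on generalizing A with
  | _ N ih =>
  have hne : ∀ i, (A i).Nonempty := by
    intro i
    by_contra h
    rw [Finset.not_nonempty_iff_eq_empty] at h
    have := hA {i}
    rw [Finset.set_biUnion_singleton, h, Finset.coe_empty, span_empty, finrank_bot] at this
    simp at this
  by_cases hone : ∀ i, (A i).card ≤ 1
  · choose x hx using hne
    refine ⟨x, hx, ?_⟩
    rw [linearIndependent_iff_card_le_finrank_span]
    have hset : (⋃ i ∈ (Finset.univ : Finset ι), (A i : Set M)) = Set.range x := by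
      ext y
      simp only [Finset.mem_univ, Set.iUnion_true, Set.mem_iUnion, Finset.mem_coe, Set.mem_range]
      exact exists_congr fun i =>
        ⟨fun hy => Finset.card_le_one.mp (hone i) _ (hx i) _ hy, fun hy => hy ▸ hx i⟩
    have := hA Finset.univ
    rwa [hset] at this
  · push Not at hone
    obtain ⟨i₀, hi₀⟩ := hone
    obtain ⟨y, hy, z, hz, hyz⟩ := Finset.one_lt_card.mp hi₀
    have step : ∀ t ∈ A i₀,
        (∀ J : Finset ι, J.card ≤ finrank K (span K
          (⋃ i ∈ J, (Function.update A i₀ ((A i₀).erase t) i : Set M)))) →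
        ∃ x : ι → M, (∀ i, x i ∈ A i) ∧ LinearIndependent K x := by
      intro t ht hJ
      have hlt : ∑ i, (Function.update A i₀ ((A i₀).erase t) i).card < N := by
        rw [← hN]
        refine Finset.sum_lt_sum (fun i _ => ?_) ⟨i₀, Finset.mem_univ _, ?_⟩
        · rcases eq_or_ne i i₀ with rfl | h
          · simpa using Finset.card_le_card (Finset.erase_subset t _)
          · simp [h]
        · simpa using Finset.card_erase_lt_of_mem ht
      obtain ⟨x, hx, hli⟩ := ih _ hlt _ hJ rfl
      refine ⟨x, fun i => ?_, hli⟩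
      have := hx i
      rcases eq_or_ne i i₀ with rfl | h
      · rw [Function.update_self] at this
        exact Finset.mem_of_mem_erase this
      · rwa [Function.update_of_ne h] at this
    by_contra hcon
    have fails : ∀ t ∈ A i₀, ∃ J : Finset ι, i₀ ∉ J ∧ finrank K (span K
        ((⋃ i ∈ J, (A i : Set M)) ∪ ((A i₀).erase t : Set M))) ≤ J.card := by
      intro t ht
      have h : ¬ _ := fun h => hcon (step t ht h)
      push Not at h
      obtain ⟨J, hJ⟩ := h
      have hmem : i₀ ∈ J := by
        by_contra hnot
        have hc : (⋃ i ∈ J, (Function.update A i₀ ((A i₀).erase t) i : Set M)) =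
            ⋃ i ∈ J, (A i : Set M) :=
          Set.iUnion₂_congr fun i hi => by
            rw [Function.update_of_ne (ne_of_mem_of_not_mem hi hnot)]
        rw [hc] at hJ
        exact absurd (hA J) (not_le.mpr hJ)
      refine ⟨J.erase i₀, Finset.notMem_erase _ _, ?_⟩
      have hc : (⋃ i ∈ J, (Function.update A i₀ ((A i₀).erase t) i : Set M)) =
          (⋃ i ∈ J.erase i₀, (A i : Set M)) ∪ ((A i₀).erase t : Set M) := by
        conv_lhs => rw [← Finset.insert_erase hmem]
        rw [Finset.set_biUnion_insert, Function.update_self, Set.union_comm]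
        congr 1
        exact Set.iUnion₂_congr fun i hi => by
          rw [Function.update_of_ne (Finset.ne_of_mem_erase hi)]
      rw [hc] at hJ
      have := Finset.card_erase_add_one hmem
      omega
    obtain ⟨J, hJ0, hJ⟩ := fails y hy
    obtain ⟨L, hL0, hL⟩ := fails z hz
    set P := span K ((⋃ i ∈ J, (A i : Set M)) ∪ ((A i₀).erase y : Set M)) with hP
    set Q := span K ((⋃ i ∈ L, (A i : Set M)) ∪ ((A i₀).erase z : Set M)) with hQ
    have : FiniteDimensional K P := FiniteDimensional.span_of_finite K
      ((J.finite_toSet.biUnion fun i _ => (A i).finite_toSet).union (Finset.finite_toSet _))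
    have : FiniteDimensional K Q := FiniteDimensional.span_of_finite K
      ((L.finite_toSet.biUnion fun i _ => (A i).finite_toSet).union (Finset.finite_toSet _))
    have hmod := finrank_sup_add_finrank_inf_eq P Q
    have hsup : span K (⋃ i ∈ insert i₀ (J ∪ L), (A i : Set M)) ≤ P ⊔ Q := by
      rw [hP, hQ, ← span_union]
      refine span_mono (Set.iUnion₂_subset fun i hi v hv => ?_)
      rcases Finset.mem_insert.mp hi with rfl | hi
      · by_cases hvy : v = y
        · exact Or.inr (Or.inr (Finset.mem_coe.mpr
            (Finset.mem_erase.mpr ⟨hvy ▸ hyz, hv⟩)))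
        · exact Or.inl (Or.inr (Finset.mem_coe.mpr (Finset.mem_erase.mpr ⟨hvy, hv⟩)))
      · rcases Finset.mem_union.mp hi with hi | hi
        · exact Or.inl (Or.inl (Set.mem_biUnion hi hv))
        · exact Or.inr (Or.inl (Set.mem_biUnion hi hv))
    have hinf : span K (⋃ i ∈ J ∩ L, (A i : Set M)) ≤ P ⊓ Q := by
      refine le_inf (span_mono ?_) (span_mono ?_) <;>
        refine Set.iUnion₂_subset fun i hi v hv => Or.inl (Set.mem_biUnion ?_ hv)
      · exact (Finset.mem_inter.mp hi).1
      · exact (Finset.mem_inter.mp hi).2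
    have h1 := (hA _).trans (finrank_mono hsup)
    have h2 := (hA _).trans (finrank_mono hinf)
    rw [Finset.card_insert_of_notMem (by simp [hJ0, hL0])] at h1
    have h3 := Finset.card_union_add_card_inter J L
    omega

open Module Submodule in
/-- The edges of an `(a,a)`-sparse multigraph can be colored with `a` colors in such a way that
each color class is a forest, i.e. has linearly independent incidence vectors. -/
theorem SparseOn.exists_linearIndependent_coloring {V E : Type} [Fintype V] [DecidableEq V]
    {tail head : E → V} {a : ℕ} {F : Finset E} (h : SparseOn tail head (a : ℤ) (a : ℤ) F) :
    ∃ c : F → Fin a, LinearIndependent ℝ fun e : F =>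
      (Pi.single (c e) (Pi.single (tail e) 1 - Pi.single (head e) 1) : Fin a → V → ℝ) := by
  classical
  let row (e : F) (i : Fin a) : Fin a → V → ℝ :=
    Pi.single i (Pi.single (tail e) 1 - Pi.single (head e) 1)
  let A (e : F) : Finset (Fin a → V → ℝ) := Finset.univ.image (row e)
  suffices hrank : ∀ J : Finset F,
      J.card ≤ finrank ℝ (span ℝ (⋃ e ∈ J, (A e : Set (Fin a → V → ℝ)))) by
    obtain ⟨x, hx, hli⟩ := exists_linearIndependent_transversal A hrank
    have hc : ∀ e, ∃ i, row e i = x e := fun e => by simpa [A] using hx e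
    choose c hc using hc
    exact ⟨c, by rwa [← funext hc] at hli⟩
  intro J
  set S := span ℝ (⋃ e ∈ J, (A e : Set (Fin a → V → ℝ)))
  let unit (i : Fin a) (v : V) : Fin a → V → ℝ := Pi.single i (Pi.single v 1)
  let r : Setoid V :=
    { r := fun v w => ∀ i, unit i v - unit i w ∈ S
      iseqv :=
        { refl := fun v i => by simp
          symm := fun hvw i => by simpa using S.neg_mem (hvw i)
          trans := fun hvw hwx i => by simpa using S.add_mem (hvw i) (hwx i) } }
  have hedge : ∀ e ∈ J, (Quotient.mk r (tail e)) = Quotient.mk r (head e) := by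
    refine fun e he => Quotient.sound fun i => subset_span (Set.mem_biUnion he ?_)
    simp only [A, Finset.coe_image, Finset.coe_univ, Set.image_univ, Set.mem_range]
    exact ⟨i, by simp [row, unit, Pi.single_sub]⟩
  have hquot : finrank ℝ ((Fin a → V → ℝ) ⧸ S) ≤ a * Fintype.card (Quotient r) := by
    let g : Fin a × Quotient r → (Fin a → V → ℝ) ⧸ S := fun q => S.mkQ (unit q.1 q.2.out)
    have hg : span ℝ (Set.range g) = ⊤ := by
      refine eq_top_iff.mpr fun y _ => ?_
      obtain ⟨x, rfl⟩ := S.mkQ_surjective y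
      have hx : x = ∑ i, ∑ v, x i v • unit i v := by
        ext i v
        simp [unit, Finset.sum_apply, Pi.single_apply, apply_ite, ite_apply]
      rw [hx]
      simp only [map_sum, map_smul]
      refine sum_mem fun i _ => sum_mem fun v _ => smul_mem _ _ ?_
      have hv : S.mkQ (unit i v) = g (i, Quotient.mk r v) :=
        (Submodule.Quotient.eq S).mpr (r.symm (Quotient.mk_out v) i)
      exact hv ▸ subset_span ⟨_, rfl⟩
    have := finrank_range_le_card (R := ℝ) g
    rwa [Set.finrank, hg, finrank_top, Fintype.card_prod, Fintype.card_fin] at this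
  have hsum : finrank ℝ ((Fin a → V → ℝ) ⧸ S) + finrank ℝ S = a * Fintype.card V := by
    rw [finrank_quotient_add_finrank, finrank_pi_fintype]
    simp
  let W (q : Quotient r) : Finset V := Finset.univ.filter fun v => Quotient.mk r v = q
  have hW : ∑ q, (W q).card = Fintype.card V :=
    (Finset.card_eq_sum_card_fiberwise (f := Quotient.mk r) (t := Finset.univ)
      (fun _ _ => Finset.mem_coe.mpr (Finset.mem_univ _))).symm
  have hfib : J.card = ∑ q, (J.filter fun e : F => Quotient.mk r (tail e) = q).card :=
    Finset.card_eq_sum_card_fiberwise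
      (fun _ _ => Finset.mem_coe.mpr (Finset.mem_univ _))
  have hle : ∀ q, ((J.filter fun e : F => Quotient.mk r (tail e) = q).card : ℤ) ≤
      a * (W q).card - a := by
    intro q
    refine le_trans ?_ (h (W q) ⟨q.out, by simp [W]⟩)
    refine Int.ofNat_le.mpr (Finset.card_le_card_of_injOn Subtype.val (fun e he => ?_)
      Subtype.val_injective.injOn)
    rw [Finset.mem_coe, Finset.mem_filter] at he
    have := hedge e he.1
    simp [W, ← this, he.2]
  have htotal : (J.card : ℤ) ≤ a * Fintype.card V - a * Fintype.card (Quotient r) := by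
    rw [hfib, ← hW]
    push_cast
    refine (Finset.sum_le_sum fun q _ => hle q).trans (le_of_eq ?_)
    rw [Finset.sum_sub_distrib, ← Finset.mul_sum]
    simp [mul_comm]
  zify at hquot hsum ⊢
  linarith

theorem isWeightedHomogeneous_pureCond {E V : Type} [DecidableEq E] [Fintype V] [DecidableEq V]
    (k a : ℕ) (tail head : E → V) (red : E → Bool) (u : V) (σ : (E ⊕ Fin k) ≃ (V × Fin k))
    (e : E) :
    IsWeightedHomogeneous (fun s : E × Fin k => if s.1 = e then 1 else 0)
      (pureCond k a tail head red id u σ) 1 := by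
  classical
  set w : E × Fin k → ℕ := fun s => if s.1 = e then 1 else 0
  have hX : ∀ (e' : E) (i : Fin k),
      IsWeightedHomogeneous w (X (e', i) : MvPolynomial (E × Fin k) ℝ) (if e' = e then 1 else 0) :=
    fun e' i => isWeightedHomogeneous_X ℝ w (e', i)
  let deg (r : V × Fin k) : ℕ := if r = σ (Sum.inl e) then 1 else 0
  rw [pureCond, Matrix.det_apply]
  refine IsWeightedHomogeneous.sum _ _ _ fun π _ => ?_
  have hprod : ∑ c, deg (π c) = 1 := by
    rw [Equiv.sum_comp π deg]
    simp [deg]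
  rw [← hprod]
  refine (weightedHomogeneousSubmodule ℝ w _).smul_of_tower_mem _
    (IsWeightedHomogeneous.prod _ _ _ fun c _ => ?_)
  rw [Matrix.of_apply]
  obtain ⟨x, hx⟩ := σ.surjective (π c)
  rw [← hx, Equiv.symm_apply_apply]
  rcases x with e' | i
  · have hdeg : deg (σ (Sum.inl e')) = if e' = e then 1 else 0 := by simp [deg]
    have hXe := hX e' c.2
    rw [hdeg]
    generalize (if e' = e then 1 else 0) = d at hXe
    simp only [Sum.elim_inl, id]
    split_ifs
    · exact isWeightedHomogeneous_zero _ _ _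
    · exact hXe
    · exact hXe.neg
    · exact isWeightedHomogeneous_zero _ _ _
  · have hdeg : deg (σ (Sum.inr i)) = 0 := by simp [deg]
    rw [hdeg]
    simp only [Sum.elim_inr]
    split_ifs
    · exact isWeightedHomogeneous_one _ _
    · exact isWeightedHomogeneous_zero _ _ _

/-- The pure condition of a bicolored multigraph is nonzero if its edges can be colored, the red
ones with colors below `a`, so that each color class is a forest. -/
theorem pureCond_ne_zero_of_coloring {E V : Type} [Fintype E] [Fintype V] [DecidableEq V]
    {k a : ℕ} {tail head : E → V} (hne : ∀ e, tail e ≠ head e) {red : E → Bool} (u : V)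
    (σ : (E ⊕ Fin k) ≃ (V × Fin k)) (c : E → Fin k)
    (hred : ∀ e, red e = true → (c e : ℕ) < a)
    (hc : LinearIndependent ℝ fun e : E =>
      (Pi.single (c e) (Pi.single (tail e) 1 - Pi.single (head e) 1) : Fin k → V → ℝ)) :
    pureCond k a tail head red id u σ ≠ 0 := by
  classical
  intro h0
  have h1 := congrArg (eval fun s : E × Fin k => if s.2 = c s.1 then (1 : ℝ) else 0) h0
  rw [pureCond, map_zero, RingHom.map_det, ← Matrix.exists_vecMul_eq_zero_iff] at h1
  obtain ⟨y, hy0, hy⟩ := h1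
  have hcol : ∀ (v : V) (i : Fin k),
      (∑ e, y (σ (Sum.inl e)) * (Pi.single (c e)
        (Pi.single (tail e) 1 - Pi.single (head e) 1) : Fin k → V → ℝ) i v) +
      (if v = u then y (σ (Sum.inr i)) else 0) = 0 := by
    intro v i
    have hvi := congrFun hy (v, i)
    rw [Matrix.vecMul, dotProduct, ← Equiv.sum_comp σ, Fintype.sum_sum_type] at hvi
    rw [Pi.zero_apply] at hvi
    refine Eq.trans ?_ hvi
    congr 1
    · refine Finset.sum_congr rfl fun e _ => congrArg _ ?_
      simp only [RingHom.mapMatrix_apply, Matrix.map_apply, Matrix.of_apply,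
        Equiv.symm_apply_apply, Sum.elim_inl, id]
      by_cases hi : i = c e
      · subst hi
        rw [if_neg (fun h => absurd (hred e h.1) (not_lt.mpr h.2)), Pi.single_eq_same,
          Pi.sub_apply, Pi.single_apply, Pi.single_apply]
        by_cases ht : v = tail e
        · simp [ht, hne e]
        · by_cases hh : v = head e <;> simp [ht, hh, (hne e).symm]
      · rw [Pi.single_eq_of_ne hi]
        split_ifs <;> simp [hi]
    · by_cases hv : v = u <;> simp [hv, Prod.ext_iff, apply_ite (eval _)]
  have hinr : ∀ i, y (σ (Sum.inr i)) = 0 := by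
    intro i
    have hsum : ∑ v, ((∑ e, y (σ (Sum.inl e)) * (Pi.single (c e)
        (Pi.single (tail e) 1 - Pi.single (head e) 1) : Fin k → V → ℝ) i v) +
      (if v = u then y (σ (Sum.inr i)) else 0)) = 0 :=
      Finset.sum_eq_zero fun v _ => hcol v i
    rw [Finset.sum_add_distrib, Finset.sum_comm, Finset.sum_ite_eq' Finset.univ u,
      if_pos (Finset.mem_univ _)] at hsum
    rw [Finset.sum_eq_zero, zero_add] at hsum
    · exact hsum
    · intro e _
      rw [← Finset.mul_sum]
      by_cases hi : i = c e
      · subst hi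
        simp
      · simp [Pi.single_eq_of_ne hi]
  have hinl : ∀ e, y (σ (Sum.inl e)) = 0 := by
    refine Fintype.linearIndependent_iff.mp hc (fun e => y (σ (Sum.inl e))) ?_
    ext i v
    simpa [hinr] using hcol v i
  refine hy0 (funext fun r => ?_)
  obtain ⟨x, rfl⟩ := σ.surjective r
  rcases x with e | i
  · exact hinl e
  · exact hinr i

theorem ABSparseOn.exists_linearIndependent_coloring {V E : Type} [Fintype E] [Fintype V]
    [DecidableEq V] [DecidableEq E] {tail head : E → V} {red : E → Bool} {a b : ℕ}
    (h : ABSparseOn tail head red a b (Finset.univ : Finset E)) :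
    ∃ c : E → Fin (a + b), (∀ e, red e = true → (c e : ℕ) < a) ∧
      LinearIndependent ℝ fun e : E =>
        (Pi.single (c e) (Pi.single (tail e) 1 - Pi.single (head e) 1) :
          Fin (a + b) → V → ℝ) := by
  classical
  obtain ⟨B', hB', hA, hB⟩ := h
  set P := (Finset.univ.filter fun e => red e = true) ∪ B' with hP
  set Q := (Finset.univ.filter fun e => red e = false) \ B' with hQ
  obtain ⟨c₁, hc₁⟩ := hA.exists_linearIndependent_coloring
  obtain ⟨c₂, hc₂⟩ := hB.exists_linearIndependent_coloring
  have hPQ : ∀ e, e ∉ P → e ∈ Q := by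
    intro e
    simp only [hP, hQ, Finset.mem_union, Finset.mem_sdiff, Finset.mem_filter, Finset.mem_univ,
      true_and]
    cases red e <;> simp
  have hQP : ∀ e ∈ Q, e ∉ P := by
    intro e
    simp only [hP, hQ, Finset.mem_union, Finset.mem_sdiff, Finset.mem_filter, Finset.mem_univ,
      true_and]
    cases red e <;> simp
  let c (e : E) : Fin (a + b) :=
    if he : e ∈ P then Fin.castAdd b (c₁ ⟨e, he⟩) else Fin.natAdd a (c₂ ⟨e, hPQ e he⟩)
  have hcP : ∀ e : P, c e = Fin.castAdd b (c₁ e) := fun e => dif_pos e.2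
  have hcQ : ∀ e : Q, c e = Fin.natAdd a (c₂ e) := fun e => dif_neg (hQP e e.2)
  refine ⟨c, fun e he => ?_, ?_⟩
  · have hmem : e ∈ P := by simp [hP, he]
    rw [hcP ⟨e, hmem⟩]
    simp
  rw [Fintype.linearIndependent_iff] at hc₁ hc₂ ⊢
  intro g hg
  have hsplit : ∀ (i : Fin (a + b)) (v : V),
      (∑ e : P, g e * (Pi.single (c e) (Pi.single (tail e) 1 - Pi.single (head e) 1) :
        Fin (a + b) → V → ℝ) i v) +
      (∑ e : Q, g e * (Pi.single (c e) (Pi.single (tail e) 1 - Pi.single (head e) 1) :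
        Fin (a + b) → V → ℝ) i v) = 0 := by
    intro i v
    have hiv := congrFun (congrFun hg i) v
    simp only [Finset.sum_apply, Pi.smul_apply, smul_eq_mul, Pi.zero_apply] at hiv
    have hcompl : Pᶜ = Q := by
      ext e
      exact ⟨fun he => hPQ e (Finset.mem_compl.mp he), fun he => Finset.mem_compl.mpr (hQP e he)⟩
    rw [← hiv, ← Finset.sum_add_sum_compl P, hcompl]
    congr 1
    · exact Finset.sum_coe_sort P fun e => g e * (Pi.single (c e)
        (Pi.single (tail e) 1 - Pi.single (head e) 1) : Fin (a + b) → V → ℝ) i v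
    · exact Finset.sum_coe_sort Q fun e => g e * (Pi.single (c e)
        (Pi.single (tail e) 1 - Pi.single (head e) 1) : Fin (a + b) → V → ℝ) i v
  have hgP : ∀ e : P, g e = 0 := by
    refine hc₁ (fun e => g e) ?_
    ext i v
    have := hsplit (Fin.castAdd b i) v
    rw [Finset.sum_eq_zero (s := (Finset.univ : Finset Q)), add_zero] at this
    · simpa [hcP, Finset.sum_apply, Pi.single_apply, ite_apply] using this
    · intro e _
      rw [hcQ, Pi.single_eq_of_ne (by simp [Fin.ext_iff]; omega)]
      simp
  have hgQ : ∀ e : Q, g e = 0 := by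
    refine hc₂ (fun e => g e) ?_
    ext i v
    have := hsplit (Fin.natAdd a i) v
    rw [Finset.sum_eq_zero (s := (Finset.univ : Finset P)), zero_add] at this
    · simpa [hcQ, Finset.sum_apply, Pi.single_apply, ite_apply] using this
    · intro e _
      rw [hcP, Pi.single_eq_of_ne (by simp [Fin.ext_iff]; omega)]
      simp
  intro e
  by_cases he : e ∈ P
  · exact hgP ⟨e, he⟩
  · exact hgQ ⟨e, hPQ e he⟩

/-- if `e` is in the support of an irreducible factor `f` of the pure
condition, then every monomial of `f` is divisible by some variable `X (e, i)`. -/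
theorem stmt14 {n : ℕ} {E : Type} [Fintype E] [DecidableEq E]
    (tail head : E → Fin n) (hlt : ∀ e, tail e < head e)
    (red : E → Bool) (a b : ℕ) (ha : 0 < a) (hb : 0 < b)
    (hsparse : ABSparseOn tail head red a b (Finset.univ : Finset E))
    (hE : Fintype.card E = (a + b) * n - (a + b))
    (u : Fin n) (σ : (E ⊕ Fin (a + b)) ≃ (Fin n × Fin (a + b)))
    (f : MvPolynomial (E × Fin (a + b)) ℝ) (hf : Irreducible f)
    (hdvd : f ∣ pureCond (a + b) a tail head red id u σ)
    (e : E) (he : InSupport f e) :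
    ∀ m ∈ f.support, ∃ i : Fin (a + b), 0 < m (e, i) := by
  obtain ⟨c, hred, hc⟩ := hsparse.exists_linearIndependent_coloring
  have hne := pureCond_ne_zero_of_coloring (fun e => (hlt e).ne) u σ c hred hc
  obtain ⟨d, hd⟩ := (isWeightedHomogeneous_pureCond (a + b) a tail head red u σ e).of_dvd hne hdvd
  have hweight : ∀ m : E × Fin (a + b) →₀ ℕ,
      Finsupp.weight (fun s : E × Fin (a + b) => if s.1 = e then 1 else 0) m =
        ∑ i, m (e, i) := by
    intro m
    rw [Finsupp.weight_apply, Finsupp.sum_fintype _ _ (by simp), Fintype.sum_prod_type]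
    simp
  obtain ⟨i, hi⟩ := he
  obtain ⟨m₀, hm₀, him₀⟩ := (mem_vars_iff_mem_support _).mp hi
  have hd₀ := hd (mem_support_iff.mp hm₀)
  rw [hweight] at hd₀
  intro m hm
  have hdm := hd (mem_support_iff.mp hm)
  rw [hweight] at hdm
  by_contra! hcon
  have hzero : ∑ j, m (e, j) = 0 := Finset.sum_eq_zero fun j _ => Nat.le_zero.mp (hcon j)
  have hpos := Finset.single_le_sum (f := fun j => m₀ (e, j)) (fun _ _ => Nat.zero_le _)
    (Finset.mem_univ i)
  have := Finsupp.mem_support_iff.mp him₀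
  omega
end
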